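/- Let k ≥ 0, 0 ≤ s ≤ k, r ≥ 1, and let 1 ≤ i₁ ≤ i₂ ≤ … ≤ i_{k+1} ≤ m and ℓ ≥ j₁ ≥ j₂ ≥ … ≥ j_{k+1} ≥ m. Among all multisets of k+1 variables containing exactly s variables of degree −r−1 and exactly k+1−s variables of degree −r, whose multiset of row indices of the colors is {i₁,…,i_{k+1}} and whose multiset of column indices is {j₁,…,j_{k+1}}, the minimum with respect to the order on finite multisets of variables is the multiset consisting of the variables x_{i_a, j_{s+1−a}}(−r−1) for 1 ≤ a ≤ s together with the variables x_{i_{s+a}, j_{k+2−a}}(−r) for 1 ≤ a ≤ k+1−s. -/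

import Mathlib

/-- The elements of a finite multiset over a linearly ordered set, listed in decreasing order. -/
def descList {X : Type*} [LinearOrder X] (M : Multiset X) : List X :=
  (M.sort (· ≤ ·)).reverse

/-- The order on finite multisets over a linearly ordered set: `M < N` iff, listing the
elements of each multiset in decreasing order, either at the first position where the two
lists differ the element of `M` is smaller than that of `N`, or the list of `M` is a proper
initial segment of the list of `N`. -/
def mlt {X : Type*} [LinearOrder X] (M N : Multiset X) : Prop :=
  List.Lex (· < ·) (descList M) (descList N)

/-- `M ≤ N` iff `M < N` or `M = N`. -/
def mle {X : Type*} [LinearOrder X] (M N : Multiset X) : Prop :=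
  mlt M N ∨ M = N

/-- A variable `x_{ij}(-r)` is encoded as the triple `(i, j, r) : ℕ × ℕ × ℕ`.  Variables are
linearly ordered by `x_{ij}(-r) < x_{i'j'}(-r')` iff `-r < -r'`, or (`r = r'` and
`(i,j) < (i',j')` as colors), where colors are ordered by `(i',j') < (i,j)` iff `i' > i`, or
(`i' = i` and `j' < j`).  This order is realized by the strictly monotone injection
`varKey (i,j,r) = (−r, (−i, j))` into `ℤ ×ₗ (ℤ ×ₗ ℤ)` (lexicographic order); the first
conjunct of the theorem below records this. -/
def varKey (v : ℕ × ℕ × ℕ) : ℤ ×ₗ (ℤ ×ₗ ℤ) :=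
  toLex (-(v.2.2 : ℤ), toLex (-(v.1 : ℤ), (v.2.1 : ℤ)))

/-- The claimed minimal multiset of variables (0-based indexing of the sequences `i`, `j`):
for positions `a < s`, the variable `x_{i_a, j_{s-1-a}}(-(r+1))` (1-based: `x_{i_a, j_{s+1-a}}(-r-1)`
for `1 ≤ a ≤ s`), and for positions `s ≤ a ≤ k`, the variable `x_{i_a, j_{k-a+s}}(-r)`
(1-based: `x_{i_{s+a}, j_{k+2-a}}(-r)` for `1 ≤ a ≤ k+1-s`). -/
def minMono (i j : ℕ → ℕ) (k s r : ℕ) : Multiset (ℕ × ℕ × ℕ) :=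
  (Finset.range (k + 1)).val.map
    (fun a => if a < s then (i a, j (s - 1 - a), r + 1) else (i a, j (k - a + s), r))

/-!
In a decreasing listing the variables of degree `-d` come before those of degree `-e` for `d < e`,
so a minimal multiset must first make its variables with the smallest `d` small: it spends its
largest row indices and its smallest column indices on them, and within one degree it combines
large rows with large columns. A multiset `N` with these properties is compared with a competitor
`M` at a variable `v` of degree `-d` above which the two agree. Both have the same number of
variables of degree `-d`, and since the rows and columns of `N` that remain after the common part
are spent as early as possible, `N` has at least as many variables of degree `-d` below `v` as `M`
has. Hence `v` occurs in `N` at most as often as in `M`.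
-/

section Counting

variable {γ : Type*}

theorem countP_le_countP_of_imp {s : Multiset γ} {p q : γ → Prop} [DecidablePred p]
    [DecidablePred q] (h : ∀ a ∈ s, p a → q a) : s.countP p ≤ s.countP q := by
  induction s using Quot.inductionOn with
  | h l => exact List.countP_mono_left fun a ha => by simpa using h a ha

theorem countP_eq_countP_of_count_eq [DecidableEq γ] {s t : Multiset γ} {p : γ → Prop}
    [DecidablePred p] (h : ∀ a, p a → s.count a = t.count a) : s.countP p = t.countP p := by
  have hfilter : s.filter p = t.filter p := by
    ext a
    simp only [Multiset.count_filter]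
    split_ifs with ha
    exacts [h a ha, rfl]
  rw [Multiset.countP_eq_card_filter, hfilter, ← Multiset.countP_eq_card_filter]

theorem countP_eq_countP_and_add_countP_and_not (s : Multiset γ) (p q : γ → Prop)
    [DecidablePred p] [DecidablePred q] :
    s.countP p = s.countP (fun a => p a ∧ q a) + s.countP (fun a => p a ∧ ¬ q a) := by
  rw [Multiset.countP_eq_countP_filter_add s p q, Multiset.countP_filter, Multiset.countP_filter]

theorem countP_le_countP_of_agree [DecidableEq γ] {M N : Multiset γ} {p q agree : γ → Prop}
    [DecidablePred p] [DecidablePred q] (hp : N.countP p = M.countP p)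
    (hagree : ∀ a, agree a → N.count a = M.count a)
    (hN : ∀ a ∈ N, p a → agree a ∨ q a) (hq : ∀ a, q a → p a ∧ ¬ agree a) :
    M.countP q ≤ N.countP q := by
  classical
  have hcommon : N.countP (fun a => p a ∧ agree a) = M.countP (fun a => p a ∧ agree a) :=
    countP_eq_countP_of_count_eq fun a ha => hagree a ha.2
  have hrest : N.countP (fun a => p a ∧ ¬ agree a) = M.countP (fun a => p a ∧ ¬ agree a) := by
    rw [countP_eq_countP_and_add_countP_and_not N p agree,
      countP_eq_countP_and_add_countP_and_not M p agree, hcommon] at hp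
    exact Nat.add_left_cancel hp
  calc M.countP q
      ≤ M.countP (fun a => p a ∧ ¬ agree a) := countP_le_countP_of_imp fun a _ => hq a
    _ = N.countP (fun a => p a ∧ ¬ agree a) := hrest.symm
    _ ≤ N.countP q := countP_le_countP_of_imp fun a ha h => (hN a ha h.1).resolve_left h.2

theorem map_eq_replicate_add_replicate {δ : Type*} [DecidableEq δ] {M : Multiset γ} {f : γ → δ}
    {d e : δ} {a b : ℕ} (hde : d ≠ e) (hf : ∀ v ∈ M, f v = d ∨ f v = e)
    (he : (M.filter fun v => f v = e).card = a) (hd : (M.filter fun v => f v = d).card = b) :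
    M.map f = Multiset.replicate a e + Multiset.replicate b d := by
  have hmap (y : δ) : (M.filter fun v => f v = y).map f =
      Multiset.replicate (M.filter fun v => f v = y).card y := by
    simp +contextual [Multiset.eq_replicate]
  have hnot : (M.filter fun v => ¬ f v = e) = M.filter fun v => f v = d :=
    Multiset.filter_congr fun v hv => by grind
  rw [← Multiset.filter_add_not (fun v => f v = e) M, Multiset.map_add, hnot, hmap, hmap, he, hd]

end Counting

section MultisetOrder

variable {X : Type*} [LinearOrder X]

theorem coe_descList (M : Multiset X) : (descList M : Multiset X) = M := by
  simp only [descList, Multiset.coe_reverse, Multiset.sort_eq]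

theorem pairwise_descList (M : Multiset X) : (descList M).Pairwise (· ≥ ·) :=
  List.pairwise_reverse.2 (M.pairwise_sort (· ≤ ·))

theorem count_descList (M : Multiset X) (x : X) : (descList M).count x = M.count x := by
  rw [← Multiset.coe_count, coe_descList]

theorem count_eq_zero_of_pairwise_ge_of_lt {a x : X} {l : List X}
    (hl : (a :: l).Pairwise (· ≥ ·)) (hx : a < x) : (a :: l).count x = 0 := by
  refine List.count_eq_zero_of_not_mem fun hmem => ?_
  rcases List.mem_cons.1 hmem with rfl | hmem
  · exact lt_irrefl _ hx
  · exact not_le.2 hx (List.rel_of_pairwise_cons hl hmem)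

theorem exists_count_lt_of_lex {l₁ l₂ : List X} (h : List.Lex (· < ·) l₁ l₂)
    (h₁ : l₁.Pairwise (· ≥ ·)) (h₂ : l₂.Pairwise (· ≥ ·)) :
    ∃ x, (∀ y, x < y → l₁.count y = l₂.count y) ∧ l₁.count x < l₂.count x := by
  induction h with
  | @nil b l =>
    refine ⟨b, fun y hy => ?_, ?_⟩
    · rw [count_eq_zero_of_pairwise_ge_of_lt h₂ hy, List.count_nil]
    · exact List.count_pos_iff.2 List.mem_cons_self
  | @cons a l₁ l₂ _ ih =>
    obtain ⟨x, hx, hlt⟩ := ih h₁.of_cons h₂.of_cons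
    refine ⟨x, fun y hy => ?_, ?_⟩
    · rw [List.count_cons, List.count_cons, hx y hy]
    · rw [List.count_cons, List.count_cons]
      exact Nat.add_lt_add_right hlt _
  | @rel a l₁ b l₂ hab =>
    refine ⟨b, fun y hy => ?_, ?_⟩
    · rw [count_eq_zero_of_pairwise_ge_of_lt h₁ (hab.trans hy),
        count_eq_zero_of_pairwise_ge_of_lt h₂ hy]
    · rw [count_eq_zero_of_pairwise_ge_of_lt h₁ hab]
      exact List.count_pos_iff.2 List.mem_cons_self

theorem mle_of_count_le {M N : Multiset X}
    (h : ∀ x ∈ M, (∀ y, x < y → M.count y = N.count y) → M.count x ≤ N.count x) : mle M N := by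
  rcases trichotomous_of (List.Lex (α := X) (· < ·)) (descList M) (descList N) with
    hlt | heq | hgt
  · exact Or.inl hlt
  · exact Or.inr (by rw [← coe_descList M, heq, coe_descList])
  · obtain ⟨x, hx, hlt⟩ := exists_count_lt_of_lex hgt (pairwise_descList N) (pairwise_descList M)
    simp only [count_descList] at hx hlt
    have hmem : x ∈ M := Multiset.count_pos.1 (Nat.zero_lt_of_lt hlt)
    exact absurd (h x hmem fun y hy => (hx y hy).symm) (not_le.2 hlt)

end MultisetOrder

section Greedy

variable {α β δ X : Type*} [LinearOrder α] [LinearOrder β] [LinearOrder δ] [LinearOrder X]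

/-- The order on variables `x_{ij}(-d)`, encoded as triples `(i, j, d)` with row indices, column
indices and negated degrees in arbitrary linear orders. -/
def VarLT (v w : α × β × δ) : Prop :=
  w.2.2 < v.2.2 ∨ (v.2.2 = w.2.2 ∧ (w.1 < v.1 ∨ (v.1 = w.1 ∧ v.2.1 < w.2.1)))

instance (v : α × β × δ) : DecidablePred (VarLT v) :=
  fun _ => inferInstanceAs (Decidable (_ ∨ _))

theorem varKey_lt_varKey_iff (v w : ℕ × ℕ × ℕ) : varKey v < varKey w ↔ VarLT v w := by
  simp only [varKey, VarLT, Prod.Lex.toLex_lt_toLex]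
  omega

theorem eq_of_not_varLT {v w : α × β × δ} (hvw : ¬ VarLT v w) (hwv : ¬ VarLT w v) : v = w := by
  unfold VarLT at hvw hwv
  grind

theorem injective_of_lt_iff_varLT {key : α × β × δ → X}
    (hkey : ∀ v w, key v < key w ↔ VarLT v w) : Function.Injective key := fun v w h =>
  eq_of_not_varLT (fun hvw => ((hkey v w).2 hvw).ne h) fun hwv => ((hkey w v).2 hwv).ne' h

theorem countP_degree_eq (K : Multiset (α × β × δ)) (v : α × β × δ) :
    K.countP (fun w => w.2.2 = v.2.2) =
      K.countP (fun w => w.2.2 = v.2.2 ∧ VarLT v w) + K.count v +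
        K.countP (fun w => w.2.2 = v.2.2 ∧ v.1 < w.1) +
        K.countP (fun w => w.2.2 = v.2.2 ∧ w.1 = v.1 ∧ w.2.1 < v.2.1) := by
  induction K using Multiset.induction_on with
  | empty => simp
  | cons w K ih =>
    have hindicator : (if w.2.2 = v.2.2 then 1 else 0) =
        (if w.2.2 = v.2.2 ∧ VarLT v w then 1 else 0) + (if v = w then 1 else 0) +
          (if w.2.2 = v.2.2 ∧ v.1 < w.1 then 1 else 0) +
          (if w.2.2 = v.2.2 ∧ w.1 = v.1 ∧ w.2.1 < v.2.1 then 1 else 0) := by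
      unfold VarLT
      grind
    simp only [Multiset.countP_cons, Multiset.count_cons, ih, hindicator]
    ring

/-- The shape of the minimal multisets: variables with smaller `d` (that is, of larger degree `-d`)
have the larger rows and the smaller columns, and within one degree rows and columns increase
together. -/
structure IsGreedy (N : Multiset (α × β × δ)) : Prop where
  row_le : ∀ v ∈ N, ∀ w ∈ N, v.2.2 < w.2.2 → w.1 ≤ v.1
  col_le : ∀ v ∈ N, ∀ w ∈ N, v.2.2 < w.2.2 → v.2.1 ≤ w.2.1
  col_le_of_row_lt : ∀ v ∈ N, ∀ w ∈ N, v.2.2 = w.2.2 → v.1 < w.1 → v.2.1 ≤ w.2.1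

namespace IsGreedy

variable {M N : Multiset (α × β × δ)} {v : α × β × δ}

theorem countP_row_gt_le (hN : IsGreedy N) (hv : v ∈ N)
    (hrow : N.map (fun w => w.1) = M.map (fun w => w.1))
    (hagree : ∀ w, VarLT v w → N.count w = M.count w) :
    M.countP (fun w => w.2.2 = v.2.2 ∧ v.1 < w.1) ≤
      N.countP (fun w => w.2.2 = v.2.2 ∧ v.1 < w.1) := by
  have hcount : N.countP (fun w => v.1 < w.1) = M.countP (fun w => v.1 < w.1) := by
    simpa only [Multiset.countP_map, ← Multiset.countP_eq_card_filter] using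
      congrArg (Multiset.countP (v.1 < ·)) hrow
  refine countP_le_countP_of_agree hcount hagree (fun w hw hlt => ?_) fun w hw => ?_
  · rcases lt_trichotomy w.2.2 v.2.2 with hdeg | hdeg | hdeg
    · exact Or.inl (Or.inl hdeg)
    · exact Or.inr ⟨hdeg, hlt⟩
    · exact absurd (hN.row_le v hv w hw hdeg) (not_le.2 hlt)
  · unfold VarLT
    grind

theorem countP_row_eq_col_lt_le (hN : IsGreedy N) (hv : v ∈ N)
    (hcol : N.map (fun w => w.2.1) = M.map (fun w => w.2.1))
    (hagree : ∀ w, VarLT v w → N.count w = M.count w) :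
    M.countP (fun w => w.2.2 = v.2.2 ∧ w.1 = v.1 ∧ w.2.1 < v.2.1) ≤
      N.countP (fun w => w.2.2 = v.2.2 ∧ w.1 = v.1 ∧ w.2.1 < v.2.1) := by
  have hcount : N.countP (fun w => w.2.1 < v.2.1) = M.countP (fun w => w.2.1 < v.2.1) := by
    simpa only [Multiset.countP_map, ← Multiset.countP_eq_card_filter] using
      congrArg (Multiset.countP (· < v.2.1)) hcol
  refine countP_le_countP_of_agree hcount hagree (fun w hw hlt => ?_) fun w hw => ?_
  · rcases lt_trichotomy w.2.2 v.2.2 with hdeg | hdeg | hdeg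
    · exact Or.inl (Or.inl hdeg)
    · rcases lt_trichotomy w.1 v.1 with hrow | hrow | hrow
      · exact Or.inl (Or.inr ⟨hdeg.symm, Or.inl hrow⟩)
      · exact Or.inr ⟨hdeg, hrow, hlt⟩
      · exact absurd (hN.col_le_of_row_lt v hv w hw hdeg.symm hrow) (not_le.2 hlt)
    · exact absurd (hN.col_le v hv w hw hdeg) (not_le.2 hlt)
  · unfold VarLT
    grind

theorem count_le (hN : IsGreedy N) (hv : v ∈ N)
    (hrow : N.map (fun w => w.1) = M.map (fun w => w.1))
    (hcol : N.map (fun w => w.2.1) = M.map (fun w => w.2.1))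
    (hdeg : N.map (fun w => w.2.2) = M.map (fun w => w.2.2))
    (hagree : ∀ w, VarLT v w → N.count w = M.count w) : N.count v ≤ M.count v := by
  have htotal : N.countP (fun w => w.2.2 = v.2.2) = M.countP (fun w => w.2.2 = v.2.2) := by
    simpa only [Multiset.countP_map, ← Multiset.countP_eq_card_filter] using
      congrArg (Multiset.countP (· = v.2.2)) hdeg
  have habove : N.countP (fun w => w.2.2 = v.2.2 ∧ VarLT v w) =
      M.countP (fun w => w.2.2 = v.2.2 ∧ VarLT v w) :=
    countP_eq_countP_of_count_eq fun w hw => hagree w hw.2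
  have hbelow₁ := hN.countP_row_gt_le hv hrow hagree
  have hbelow₂ := hN.countP_row_eq_col_lt_le hv hcol hagree
  rw [countP_degree_eq N v, countP_degree_eq M v] at htotal
  omega

theorem mle_map (hN : IsGreedy N) {key : α × β × δ → X}
    (hkey : ∀ v w, key v < key w ↔ VarLT v w)
    (hrow : N.map (fun w => w.1) = M.map (fun w => w.1))
    (hcol : N.map (fun w => w.2.1) = M.map (fun w => w.2.1))
    (hdeg : N.map (fun w => w.2.2) = M.map (fun w => w.2.2)) : mle (N.map key) (M.map key) := by
  have hcount (K : Multiset (α × β × δ)) (w : α × β × δ) : (K.map key).count (key w) = K.count w :=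
    Multiset.count_map_eq_count' key K (injective_of_lt_iff_varLT hkey) w
  refine mle_of_count_le fun x hx hagree => ?_
  obtain ⟨v, hv, rfl⟩ := Multiset.mem_map.1 hx
  rw [hcount, hcount]
  refine hN.count_le hv hrow hcol hdeg fun w hw => ?_
  simpa only [hcount] using hagree (key w) ((hkey v w).2 hw)

end IsGreedy

end Greedy

section TwoDegrees

theorem monotoneOn_Iio_succ {α : Type*} [Preorder α] {f : ℕ → α} {k : ℕ}
    (h : ∀ a < k, f a ≤ f (a + 1)) : MonotoneOn f (Set.Iio (k + 1)) :=
  monotoneOn_of_le_add_one Set.ordConnected_Iio fun a _ _ ha => h a (Nat.succ_lt_succ_iff.1 ha)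

theorem antitoneOn_Iio_succ {α : Type*} [Preorder α] {f : ℕ → α} {k : ℕ}
    (h : ∀ a < k, f (a + 1) ≤ f a) : AntitoneOn f (Set.Iio (k + 1)) :=
  antitoneOn_of_add_one_le Set.ordConnected_Iio fun a _ _ ha => h a (Nat.succ_lt_succ_iff.1 ha)

/-- The involution of `{0, …, n - 1}` that reverses each of the blocks `{0, …, s - 1}` and
`{s, …, n - 1}`. -/
def blockReverse (n s a : ℕ) : ℕ :=
  if a < s then s - 1 - a else n - 1 - a + s

theorem blockReverse_lt {n s a : ℕ} (hs : s ≤ n) (ha : a < n) : blockReverse n s a < n := by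
  grind [blockReverse]

theorem blockReverse_blockReverse {n s a : ℕ} (ha : a < n) :
    blockReverse n s (blockReverse n s a) = a := by
  grind [blockReverse]

theorem map_blockReverse_range {n s : ℕ} (hs : s ≤ n) :
    (Finset.range n).val.map (blockReverse n s) = (Finset.range n).val := by
  have hinj : Set.InjOn (blockReverse n s) (Finset.range n) := fun a ha b hb hab => by
    rw [← blockReverse_blockReverse (s := s) (Finset.mem_range.1 ha), hab,
      blockReverse_blockReverse (Finset.mem_range.1 hb)]
  rw [← Finset.image_val_of_injOn hinj]
  congr 1
  ext b
  simp only [Finset.mem_image, Finset.mem_range]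
  exact ⟨fun ⟨a, ha, hab⟩ => hab ▸ blockReverse_lt hs ha,
    fun hb => ⟨blockReverse n s b, blockReverse_lt hs hb, blockReverse_blockReverse hb⟩⟩

variable {α β δ X : Type*}

/-- The minimal multiset for two degrees `-e < -d`: the first `s` entries of `i` and of `j` are used
in degree `-e`, the other `n - s` in degree `-d`. The sequences `i` and `j` are indexed from `0`. -/
def greedyMultiset (i : ℕ → α) (j : ℕ → β) (d e : δ) (n s : ℕ) : Multiset (α × β × δ) :=
  (Finset.range n).val.map fun a => (i a, j (blockReverse n s a), if a < s then e else d)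

theorem minMono_eq_greedyMultiset (i j : ℕ → ℕ) (k s r : ℕ) :
    minMono i j k s r = greedyMultiset i j r (r + 1) (k + 1) s :=
  Multiset.map_congr rfl fun a _ => by grind [blockReverse]

variable (i : ℕ → α) (j : ℕ → β) (d e : δ) (n s : ℕ)

theorem map_row_greedyMultiset :
    (greedyMultiset i j d e n s).map (fun v => v.1) = (Finset.range n).val.map i := by
  simp only [greedyMultiset, Multiset.map_map, Function.comp_def]

theorem degree_eq_or_eq_of_mem_greedyMultiset :
    ∀ v ∈ greedyMultiset i j d e n s, v.2.2 = d ∨ v.2.2 = e := by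
  intro v hv
  obtain ⟨a, -, rfl⟩ := Multiset.mem_map.1 hv
  exact (ite_eq_or_eq (a < s) e d).symm

variable {n s}

theorem map_col_greedyMultiset (hs : s ≤ n) :
    (greedyMultiset i j d e n s).map (fun v => v.2.1) = (Finset.range n).val.map j := by
  conv_rhs => rw [← map_blockReverse_range hs]
  simp only [greedyMultiset, Multiset.map_map, Function.comp_def]

variable {d e}

theorem card_filter_greedyMultiset_right [DecidableEq δ] (hde : d ≠ e) (hs : s ≤ n) :
    ((greedyMultiset i j d e n s).filter fun v => v.2.2 = e).card = s := by
  have hfilter : (Finset.range n).filter (fun a => (if a < s then e else d) = e) =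
      Finset.range s := by
    ext a
    simp only [Finset.mem_filter, Finset.mem_range]
    grind
  rw [greedyMultiset, Multiset.filter_map, Multiset.card_map]
  exact (congrArg Finset.card hfilter).trans (Finset.card_range s)

theorem card_filter_greedyMultiset_left [DecidableEq δ] (hde : d ≠ e) :
    ((greedyMultiset i j d e n s).filter fun v => v.2.2 = d).card = n - s := by
  have hfilter : (Finset.range n).filter (fun a => (if a < s then e else d) = d) =
      Finset.Ico s n := by
    ext a
    simp only [Finset.mem_filter, Finset.mem_range, Finset.mem_Ico]
    grind
  rw [greedyMultiset, Multiset.filter_map, Multiset.card_map]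
  exact (congrArg Finset.card hfilter).trans (Nat.card_Ico s n)

variable {i j} [LinearOrder α] [LinearOrder β] [LinearOrder δ] [LinearOrder X]

theorem isGreedy_greedyMultiset (hde : d < e) (hs : s ≤ n) (hi : MonotoneOn i (Set.Iio n))
    (hj : AntitoneOn j (Set.Iio n)) : IsGreedy (greedyMultiset i j d e n s) := by
  have hdeg (a b : ℕ) : (if a < s then e else d) < (if b < s then e else d) → s ≤ a ∧ b < s := by
    grind
  constructor <;>
    simp only [greedyMultiset, Multiset.mem_map, Finset.mem_val, Finset.mem_range,
      forall_exists_index, and_imp, forall_apply_eq_imp_iff₂]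
  · intro a ha b hb hab
    obtain ⟨hsa, hbs⟩ := hdeg a b hab
    exact hi hb ha (hbs.le.trans hsa)
  · intro a ha b hb hab
    obtain ⟨hsa, hbs⟩ := hdeg a b hab
    have hle : blockReverse n s b ≤ blockReverse n s a := by grind [blockReverse]
    exact hj (blockReverse_lt hs hb) (blockReverse_lt hs ha) hle
  · intro a ha b hb hab hlt
    have hab_lt : a < b := not_le.1 fun hba => not_lt.2 (hi hb ha hba) hlt
    have hblock : a < s ↔ b < s := by grind
    have hle : blockReverse n s b ≤ blockReverse n s a := by grind [blockReverse]
    exact hj (blockReverse_lt hs hb) (blockReverse_lt hs ha) hle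

theorem stmt16_general (hde : d < e) (hs : s ≤ n) (hi : MonotoneOn i (Set.Iio n))
    (hj : AntitoneOn j (Set.Iio n)) {key : α × β × δ → X}
    (hkey : ∀ v w, key v < key w ↔ VarLT v w) :
    ((∀ v ∈ greedyMultiset i j d e n s, v.2.2 = d ∨ v.2.2 = e) ∧
      (Multiset.filter (fun v => v.2.2 = e) (greedyMultiset i j d e n s)).card = s ∧
      (Multiset.filter (fun v => v.2.2 = d) (greedyMultiset i j d e n s)).card = n - s ∧
      (greedyMultiset i j d e n s).map (fun v => v.1) = (Finset.range n).val.map i ∧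
      (greedyMultiset i j d e n s).map (fun v => v.2.1) = (Finset.range n).val.map j) ∧
    (∀ M : Multiset (α × β × δ),
      (∀ v ∈ M, v.2.2 = d ∨ v.2.2 = e) →
      (Multiset.filter (fun v => v.2.2 = e) M).card = s →
      (Multiset.filter (fun v => v.2.2 = d) M).card = n - s →
      M.map (fun v => v.1) = (Finset.range n).val.map i →
      M.map (fun v => v.2.1) = (Finset.range n).val.map j →
      mle ((greedyMultiset i j d e n s).map key) (M.map key)) := by
  have hdeg := degree_eq_or_eq_of_mem_greedyMultiset i j d e n s
  have hcard_e := card_filter_greedyMultiset_right i j hde.ne hs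
  have hcard_d := card_filter_greedyMultiset_left i j (n := n) (s := s) hde.ne
  have hrow := map_row_greedyMultiset i j d e n s
  have hcol := map_col_greedyMultiset i j d e hs
  refine ⟨⟨hdeg, hcard_e, hcard_d, hrow, hcol⟩, fun M hMdeg hMe hMd hMrow hMcol => ?_⟩
  exact (isGreedy_greedyMultiset hde hs hi hj).mle_map hkey (hrow.trans hMrow.symm)
    (hcol.trans hMcol.symm)
    ((map_eq_replicate_add_replicate hde.ne hdeg hcard_e hcard_d).trans
      (map_eq_replicate_add_replicate hde.ne hMdeg hMe hMd).symm)

end TwoDegrees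

/-- let `k ≥ 0`, `0 ≤ s ≤ k`, `r ≥ 1`, `1 ≤ i₁ ≤ … ≤ i_{k+1} ≤ m` and
`ℓ ≥ j₁ ≥ … ≥ j_{k+1} ≥ m` (0-based: `i`, `j` on `{0, …, k}`).  Among all multisets of `k+1`
variables containing exactly `s` variables of degree `−r−1` and exactly `k+1−s` of degree
`−r`, whose multiset of row indices is `{i₀, …, i_k}` and whose multiset of column indices
is `{j₀, …, j_k}`, the minimum with respect to the order on finite multisets of variables is
`minMono i j k s r`: it is such a multiset, and it is `≤` every such multiset. -/
theorem stmt16 (ℓ m k s r : ℕ) (hm : 1 ≤ m) (hml : m ≤ ℓ) (hs : s ≤ k) (hr : 1 ≤ r)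
    (i j : ℕ → ℕ)
    (hi : ∀ a ≤ k, 1 ≤ i a ∧ i a ≤ m) (hj : ∀ a ≤ k, m ≤ j a ∧ j a ≤ ℓ)
    (hmono : ∀ a < k, i a ≤ i (a + 1)) (hanti : ∀ a < k, j (a + 1) ≤ j a) :
    (∀ v w : ℕ × ℕ × ℕ, varKey v < varKey w ↔
      (w.2.2 < v.2.2 ∨ (v.2.2 = w.2.2 ∧ (w.1 < v.1 ∨ (v.1 = w.1 ∧ v.2.1 < w.2.1))))) ∧
    ((∀ v ∈ minMono i j k s r, v.2.2 = r ∨ v.2.2 = r + 1) ∧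
      (Multiset.filter (fun v => v.2.2 = r + 1) (minMono i j k s r)).card = s ∧
      (Multiset.filter (fun v => v.2.2 = r) (minMono i j k s r)).card = k + 1 - s ∧
      (minMono i j k s r).map (fun v => v.1) = (Finset.range (k + 1)).val.map i ∧
      (minMono i j k s r).map (fun v => v.2.1) = (Finset.range (k + 1)).val.map j) ∧
    (∀ M : Multiset (ℕ × ℕ × ℕ),
      (∀ v ∈ M, v.2.2 = r ∨ v.2.2 = r + 1) →
      (Multiset.filter (fun v => v.2.2 = r + 1) M).card = s →
      (Multiset.filter (fun v => v.2.2 = r) M).card = k + 1 - s →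
      M.map (fun v => v.1) = (Finset.range (k + 1)).val.map i →
      M.map (fun v => v.2.1) = (Finset.range (k + 1)).val.map j →
      mle ((minMono i j k s r).map varKey) (M.map varKey)) := by
  rw [minMono_eq_greedyMultiset]
  exact ⟨varKey_lt_varKey_iff, stmt16_general r.lt_succ_self (hs.trans k.le_succ)
    (monotoneOn_Iio_succ hmono) (antitoneOn_Iio_succ hanti) varKey_lt_varKey_iff⟩
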